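/- Let α_1, α_2, α_3, β_1, β_2 be complex numbers with Re(β_1 + β_2 − α_1 − α_2 − α_3) > 0 and Re(α_3 − β_1 + 1) > 0, and such that β_1, β_2 and the lower parameters of the series on the right-hand side are not nonpositive integers and none of the Gamma factors is evaluated at a pole. Then ₃F₂(α_1,α_2,α_3; β_1,β_2; 1) = [Γ(β_1)Γ(β_1−α_1−α_2)/(Γ(β_1−α_1)Γ(β_1−α_2))]·₃F₂(α_1, α_2, β_2−α_3; α_1+α_2−β_1+1, β_2; 1) + [Γ(β_1)Γ(β_2)Γ(α_1+α_2−β_1)Γ(β_1+β_2−α_1−α_2−α_3)/(Γ(α_1)Γ(α_2)Γ(β_2−α_3)Γ(β_1+β_2−α_1−α_2))]·₃F₂(β_1−α_1, β_1−α_2, β_1+β_2−α_1−α_2−α_3; β_1−α_1−α_2+1, β_1+β_2−α_1−α_2; 1). -/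

import Mathlib

/-- The ascending Pochhammer symbol `(x)_n`. -/
noncomputable def poch (x : ℂ) (n : ℕ) : ℂ := (ascPochhammer ℂ n).eval x

/-- The generalized hypergeometric series `₃F₂(a₁,a₂,a₃; b₁,b₂; 1)`. -/
noncomputable def F32 (a1 a2 a3 b1 b2 : ℂ) : ℂ :=
  ∑' n : ℕ, poch a1 n * poch a2 n * poch a3 n / ((n.factorial : ℂ) * poch b1 n * poch b2 n)

/-- `z` is not a nonpositive integer (i.e. `Γ` is not evaluated at a pole at `z`). -/
def NotPole (z : ℂ) : Prop := ∀ n : ℕ, z ≠ -(n : ℂ)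


open Complex Filter Topology MeasureTheory Set

lemma step_bound (x : ℂ) (k : ℝ) (hk : 1 ≤ k) :
    ‖1 + x / (k : ℂ)‖ ≤ ((k + 1) / k) ^ x.re *
      Real.exp ((‖x‖ + ‖x‖ ^ 2) * (1 / k - 1 / (k + 1))) := by
  have hk0 : 0 < k := by linarith
  have h1 : ‖1 + x / (k : ℂ)‖ ≤ Real.exp (x.re / k + ‖x‖ ^ 2 / (2 * k ^ 2)) := by
    have h2 : ‖1 + x / (k : ℂ)‖ ^ 2 = 1 + 2 * (x.re / k) + ‖x‖ ^ 2 / k ^ 2 := by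
      rw [← Complex.normSq_eq_norm_sq, Complex.normSq_add, ← Complex.normSq_eq_norm_sq]
      simp [Complex.normSq_ofReal]
      ring
    have h3 : ‖1 + x / (k : ℂ)‖ ^ 2 ≤ Real.exp (x.re / k + ‖x‖ ^ 2 / (2 * k ^ 2)) ^ 2 := by
      rw [h2, ← Real.exp_nat_mul]
      refine le_trans (le_of_eq ?_) (Real.add_one_le_exp _)
      push_cast
      field_simp
      ring
    exact le_of_sq_le_sq h3 (Real.exp_pos _).le
  refine h1.trans ?_
  rw [Real.rpow_def_of_pos (by positivity), ← Real.exp_add]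
  apply Real.exp_le_exp.mpr
  set L := Real.log ((k + 1) / k) with hL
  have hL1 : L ≤ 1 / k := by
    have := Real.log_le_sub_one_of_pos (show 0 < (k + 1) / k by positivity)
    calc L ≤ (k + 1) / k - 1 := this
      _ = 1 / k := by field_simp; ring
  have hL2 : 1 / (k + 1) ≤ L := by
    have := Real.one_sub_inv_le_log_of_pos (show 0 < (k + 1) / k by positivity)
    calc 1 / (k + 1) = 1 - ((k + 1) / k)⁻¹ := by field_simp; ring
      _ ≤ L := this
  have hre := Complex.abs_re_le_norm x
  have e1 : x.re * (1 / k - L) ≤ ‖x‖ * (1 / k - 1 / (k + 1)) := by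
    calc x.re * (1 / k - L) ≤ ‖x‖ * (1 / k - L) :=
          mul_le_mul_of_nonneg_right ((le_abs_self _).trans hre) (by linarith)
      _ ≤ _ := mul_le_mul_of_nonneg_left (by linarith) (norm_nonneg _)
  have e2 : ‖x‖ ^ 2 / (2 * k ^ 2) ≤ ‖x‖ ^ 2 * (1 / k - 1 / (k + 1)) := by
    rw [div_eq_mul_one_div]
    apply mul_le_mul_of_nonneg_left _ (by positivity)
    rw [div_sub_div _ _ (by positivity) (by positivity), div_le_div_iff₀ (by positivity) (by positivity)]
    nlinarith
  have e3 : x.re / k = x.re * (1 / k - L) + L * x.re := by ring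
  rw [e3]
  nlinarith

lemma prod_bound (x : ℂ) (m : ℕ) (hm : 1 ≤ m) (M : ℕ) :
    ‖∏ j ∈ Finset.range M, (1 + x / ((m : ℂ) + j))‖ ≤ (((m : ℝ) + M) / m) ^ x.re *
      Real.exp ((‖x‖ + ‖x‖ ^ 2) * (1 / m - 1 / (m + M))) := by
  have hm0 : (1 : ℝ) ≤ m := by exact_mod_cast hm
  induction M with
  | zero =>
    simp [div_self (show (m : ℝ) ≠ 0 by linarith)]
  | succ M ih =>
    rw [Finset.prod_range_succ, norm_mul]
    have h := step_bound x (m + M) (by have : (0 : ℝ) ≤ M := by positivity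
                                       linarith)
    push_cast at h
    refine (mul_le_mul ih h (norm_nonneg _) (by positivity)).trans (le_of_eq ?_)
    have hp : (((m : ℝ) + (M + 1 : ℕ)) / m) = ((m : ℝ) + M) / m * ((m + M + 1) / (m + M)) := by
      push_cast
      have : (m : ℝ) + M ≠ 0 := by positivity
      field_simp
      ring
    rw [hp, Real.mul_rpow (by positivity) (by positivity), mul_mul_mul_comm, ← Real.exp_add]
    congr 2
    push_cast
    ring

/-- the constant -/
noncomputable def KK (x : ℂ) : ℝ := Real.exp (‖x‖ + ‖x‖ ^ 2)

lemma prod_bound' (x : ℂ) (m : ℕ) (hm : 1 ≤ m) (M : ℕ) :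
    ‖∏ j ∈ Finset.range M, (1 + x / ((m : ℂ) + j))‖ ≤ (((m : ℝ) + M) / m) ^ x.re * KK x := by
  refine (prod_bound x m hm M).trans ?_
  unfold KK
  have hm0 : (1 : ℝ) ≤ m := by exact_mod_cast hm
  gcongr
  have h1 : 1 / (m : ℝ) ≤ 1 := by rw [div_le_one (by linarith)]; exact hm0
  have h2 : 0 ≤ 1 / ((m : ℝ) + M) := by positivity
  have h3 : 0 ≤ ‖x‖ + ‖x‖ ^ 2 := by positivity
  nlinarith

lemma poch_zero (a : ℂ) : poch a 0 = 1 := by simp [poch]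

lemma poch_succ (a : ℂ) (n : ℕ) : poch a (n + 1) = poch a n * (a + n) := by
  simp [poch, ascPochhammer_succ_right]

lemma poch_bound (a : ℂ) (n : ℕ) :
    ‖poch a n‖ ≤ n.factorial * ((n : ℝ) + 1) ^ (a.re - 1) * KK (a - 1) := by
  have h : poch a n = n.factorial * ∏ j ∈ Finset.range n, (1 + (a - 1) / (((1 : ℕ) : ℂ) + j)) := by
    induction n with
    | zero => simp [poch_zero]
    | succ n ih =>
      rw [poch_succ, ih, Finset.prod_range_succ, Nat.factorial_succ]
      have : (1 : ℂ) + n ≠ 0 := by exact_mod_cast (by omega : 1 + n ≠ 0)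
      push_cast
      field_simp
      ring
  rw [h, norm_mul, Complex.norm_natCast, mul_assoc]
  apply mul_le_mul_of_nonneg_left _ (by positivity)
  refine (prod_bound' (a - 1) 1 le_rfl n).trans (le_of_eq ?_)
  simp [add_comm]

lemma invGamma_bound (d : ℂ) (n : ℕ) :
    ‖(Gamma (d + n))⁻¹‖ ≤ ((n : ℝ) + 1) ^ (1 - d.re) / n.factorial * KK (d - 1) := by
  by_cases hG : Gamma (d + n) = 0
  · rw [hG]; simp; unfold KK; positivity
  have t1 := (GammaSeq_tendsto_Gamma (d + n)).inv₀ hG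
  have t2 := GammaSeq_tendsto_Gamma ((n : ℂ) + 1)
  have t3 := (t2.mul t1).norm
  rw [Complex.Gamma_nat_eq_factorial] at t3
  have t4 : Tendsto (fun N : ℕ => ((((n : ℝ) + 2 + N) / N) / (n + 1)) ^ (d.re - 1) * KK (d - 1)) atTop
      (𝓝 ((1 / ((n : ℝ) + 1)) ^ (d.re - 1) * KK (d - 1))) := by
    apply Tendsto.mul_const
    apply Tendsto.rpow_const _ (Or.inl (by positivity))
    apply Tendsto.div_const
    have : Tendsto (fun N : ℕ => ((n : ℝ) + 2) / N + 1) atTop (𝓝 (0 + 1)) :=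
      (tendsto_const_div_atTop_nhds_zero_nat _).add_const _
    rw [zero_add] at this
    refine this.congr' ?_
    filter_upwards [eventually_gt_atTop 0] with N hN
    have : (N : ℝ) ≠ 0 := by positivity
    field_simp
  have key := le_of_tendsto_of_tendsto t3 t4 (by
    filter_upwards [eventually_gt_atTop 0] with N hN
    have hN0 : (N : ℂ) ≠ 0 := by exact_mod_cast hN.ne'
    have hNr : (0 : ℝ) < N := by exact_mod_cast hN
    have hp : ∏ j ∈ Finset.range (N + 1), (d + n + j) =
        (∏ j ∈ Finset.range (N + 1), ((n : ℂ) + 1 + j)) *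
        ∏ j ∈ Finset.range (N + 1), (1 + (d - 1) / (((n + 1 : ℕ) : ℂ) + j)) := by
      rw [← Finset.prod_mul_distrib]
      apply Finset.prod_congr rfl
      intro j _
      have : (n : ℂ) + 1 + j ≠ 0 := by exact_mod_cast (by omega : n + 1 + j ≠ 0)
      push_cast
      field_simp
      ring
    have hp0 : ∏ j ∈ Finset.range (N + 1), ((n : ℂ) + 1 + j) ≠ 0 := by
      apply Finset.prod_ne_zero_iff.mpr
      intro j _
      exact_mod_cast (by omega : n + 1 + j ≠ 0)
    have hf : (N.factorial : ℂ) ≠ 0 := by exact_mod_cast N.factorial_ne_zero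
    have hq : GammaSeq ((n : ℂ) + 1) N * (GammaSeq (d + n) N)⁻¹ =
        (N : ℂ) ^ (-(d - 1)) * ∏ j ∈ Finset.range (N + 1), (1 + (d - 1) / (((n + 1 : ℕ) : ℂ) + j)) := by
      have e : (N : ℂ) ^ ((n : ℂ) + 1) = (N : ℂ) ^ (-(d - 1)) * (N : ℂ) ^ (d + n) := by
        rw [← cpow_add _ _ hN0]; congr 1; ring
      have hc : (N : ℂ) ^ (d + n) ≠ 0 := by simp [cpow_eq_zero_iff, hN0]
      rw [GammaSeq, GammaSeq, hp, e]
      generalize (∏ j ∈ Finset.range (N + 1), (1 + (d - 1) / (((n + 1 : ℕ) : ℂ) + j))) = P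
      simp only [inv_div]
      field_simp
    rw [hq, norm_mul, Complex.norm_natCast_cpow_of_pos hN]
    have hb := prod_bound' (d - 1) (n + 1) (by omega) (N + 1)
    refine (mul_le_mul_of_nonneg_left hb (by positivity)).trans (le_of_eq ?_)
    rw [← mul_assoc]
    congr 1
    have e2 : ((n : ℝ) + 2 + N) / N / (n + 1) = (N : ℝ)⁻¹ * ((((n + 1 : ℕ) : ℝ) + (N + 1 : ℕ)) / (n + 1 : ℕ)) := by
      push_cast; field_simp; ring
    rw [e2, Real.mul_rpow (by positivity) (by positivity), Real.inv_rpow (by positivity),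
      ← Real.rpow_neg (by positivity)]
    simp)
  rw [norm_mul, Complex.norm_natCast] at key
  have hf : (0 : ℝ) < n.factorial := by exact_mod_cast n.factorial_pos
  rw [div_mul_eq_mul_div, le_div_iff₀ hf, mul_comm]
  refine key.trans (le_of_eq ?_)
  rw [one_div, Real.inv_rpow (by positivity), ← Real.rpow_neg (by positivity)]
  congr 2
  ring

/-- regularized 3F2 term -/
noncomputable def tc (a b c d e : ℂ) (n : ℕ) : ℂ :=
  poch a n * poch b n * poch c n / n.factorial * (Gamma (d + n))⁻¹ * (Gamma (e + n))⁻¹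

/-- regularized 3F2 -/
noncomputable def RR (a b c d e : ℂ) : ℂ := ∑' n, tc a b c d e n

lemma KK_pos (x : ℂ) : 0 < KK x := Real.exp_pos _

lemma tc_bound (a b c d e : ℂ) (n : ℕ) :
    ‖tc a b c d e n‖ ≤ (KK (a - 1) * KK (b - 1) * KK (c - 1) * KK (d - 1) * KK (e - 1)) *
      ((n : ℝ) + 1) ^ (-1 - (d + e - a - b - c).re) := by
  have hf : (0 : ℝ) < n.factorial := by exact_mod_cast n.factorial_pos
  have hn : (0 : ℝ) < (n : ℝ) + 1 := by positivity
  unfold tc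
  rw [norm_mul, norm_mul, norm_div, norm_mul, norm_mul, Complex.norm_natCast]
  have ka := KK_pos (a - 1)
  have kb := KK_pos (b - 1)
  have kc := KK_pos (c - 1)
  have kd := KK_pos (d - 1)
  have ke := KK_pos (e - 1)
  have : ‖poch a n‖ * ‖poch b n‖ * ‖poch c n‖ / n.factorial * ‖(Gamma (d + n))⁻¹‖ *
      ‖(Gamma (e + n))⁻¹‖ ≤ (n.factorial * ((n : ℝ) + 1) ^ (a.re - 1) * KK (a - 1)) *
      (n.factorial * ((n : ℝ) + 1) ^ (b.re - 1) * KK (b - 1)) *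
      (n.factorial * ((n : ℝ) + 1) ^ (c.re - 1) * KK (c - 1)) / n.factorial *
      (((n : ℝ) + 1) ^ (1 - d.re) / n.factorial * KK (d - 1)) *
      (((n : ℝ) + 1) ^ (1 - e.re) / n.factorial * KK (e - 1)) := by
    gcongr
    · exact poch_bound a n
    · exact poch_bound b n
    · exact poch_bound c n
    · exact invGamma_bound d n
    · exact invGamma_bound e n
  refine this.trans (le_of_eq ?_)
  have e1 : (-1 - (d + e - a - b - c).re) =
      (a.re - 1) + (b.re - 1) + (c.re - 1) + (1 - d.re) + (1 - e.re) := by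
    simp; ring
  rw [e1, Real.rpow_add hn, Real.rpow_add hn, Real.rpow_add hn, Real.rpow_add hn]
  field_simp

lemma summable_rpow_aux {s : ℝ} (hs : 0 < s) : Summable fun n : ℕ => ((n : ℝ) + 1) ^ (-1 - s) := by
  have := (summable_nat_add_iff 1).mpr
    (Real.summable_nat_rpow.mpr (show -1 - s < -1 by linarith))
  simpa using this

lemma summable_tc {a b c d e : ℂ} (h : 0 < (d + e - a - b - c).re) :
    Summable fun n => ‖tc a b c d e n‖ :=
  Summable.of_nonneg_of_le (fun _ => norm_nonneg _) (tc_bound a b c d e)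
    ((summable_rpow_aux h).mul_left _)

lemma differentiable_poch (n : ℕ) : Differentiable ℂ fun z => poch z n :=
  (ascPochhammer ℂ n).differentiable

lemma differentiableAt_RR {a b c d e : ℂ → ℂ} (ha : Differentiable ℂ a) (hb : Differentiable ℂ b)
    (hc : Differentiable ℂ c) (hd : Differentiable ℂ d) (he : Differentiable ℂ e) (z₀ : ℂ)
    (h : 0 < (d z₀ + e z₀ - a z₀ - b z₀ - c z₀).re) :
    DifferentiableAt ℂ (fun z => RR (a z) (b z) (c z) (d z) (e z)) z₀ := by
  have ha' := ha.continuous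
  have hb' := hb.continuous
  have hc' := hc.continuous
  have hd' := hd.continuous
  have he' := he.continuous
  set P : ℂ → ℝ := fun z => KK (a z - 1) * KK (b z - 1) * KK (c z - 1) * KK (d z - 1) * KK (e z - 1)
    with hP
  set S : ℂ → ℝ := fun z => (d z + e z - a z - b z - c z).re with hS
  have cP : Continuous P := by
    simp only [hP, KK]
    fun_prop
  have cS : Continuous S := by
    simp only [hS]
    fun_prop
  set U : Set ℂ := {z | P z < P z₀ + 1} ∩ {z | S z₀ / 2 < S z} with hU
  have oU : IsOpen U := (isOpen_lt cP continuous_const).inter (isOpen_lt continuous_const cS)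
  have mU : z₀ ∈ U := ⟨by simp, by simp only [Set.mem_ofPred_eq]; have : 0 < S z₀ := h
                                   linarith⟩
  have hSz : 0 < S z₀ := h
  have D : DifferentiableOn ℂ (fun z => ∑' n, tc (a z) (b z) (c z) (d z) (e z) n) U := by
    apply differentiableOn_tsum_of_summable_norm
      (u := fun n : ℕ => (P z₀ + 1) * ((n : ℝ) + 1) ^ (-1 - S z₀ / 2))
    · exact (summable_rpow_aux (by linarith)).mul_left _
    · intro n
      apply Differentiable.differentiableOn
      unfold tc
      have q1 := (differentiable_poch n).comp ha
      have q2 := (differentiable_poch n).comp hb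
      have q3 := (differentiable_poch n).comp hc
      have q4 := differentiable_one_div_Gamma.comp (hd.add_const (n : ℂ))
      have q5 := differentiable_one_div_Gamma.comp (he.add_const (n : ℂ))
      exact ((((q1.mul q2).mul q3).div_const _).mul q4).mul q5
    · exact oU
    · intro n z hz
      refine (tc_bound _ _ _ _ _ n).trans ?_
      have h1 : P z ≤ P z₀ + 1 := le_of_lt hz.1
      have h2 : S z₀ / 2 < S z := hz.2
      have h3 : 0 ≤ P z := by simp only [hP, KK]; positivity
      refine mul_le_mul h1 ?_ (by positivity) (h3.trans h1)
      apply Real.rpow_le_rpow_of_exponent_le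
      · have : (0 : ℝ) ≤ n := by positivity
        linarith
      · change -1 - S z ≤ _
        linarith
  exact (D z₀ mU).differentiableAt (oU.mem_nhds mU)

lemma integrable_tsum_aux {F : ℕ → ℝ → ℂ} {μ : Measure ℝ} (hF_int : ∀ i, Integrable (F i) μ)
    (hF_sum : Summable fun i ↦ ∫ a, ‖F i a‖ ∂μ)
    (hm : AEStronglyMeasurable (fun a => ∑' i, F i a) μ) :
    Integrable (fun a => ∑' i, F i a) μ := by
  refine ⟨hm, ?_⟩
  have (i : ℕ) : ∫⁻ a, ‖F i a‖ₑ ∂μ = ‖∫ a, ‖F i a‖ ∂μ‖ₑ := by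
    dsimp [enorm]
    rw [lintegral_coe_eq_integral _ (hF_int i).norm, ENNReal.coe_nnreal_eq, coe_nnnorm,
      Real.norm_of_nonneg (integral_nonneg (fun a ↦ norm_nonneg (F i a)))]
    simp only [coe_nnnorm]
  have h2 : ∑' i, ∫⁻ a, ‖F i a‖ₑ ∂μ ≠ ⊤ := by
    rw [funext this]
    exact ENNReal.tsum_coe_ne_top_iff_summable.2 <| NNReal.summable_coe.1 hF_sum.abs
  have h3 : ∫⁻ a, ‖∑' i, F i a‖ₑ ∂μ ≤ ∑' i, ∫⁻ a, ‖F i a‖ₑ ∂μ := by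
    rw [← lintegral_tsum fun i => (hF_int i).1.enorm]
    exact lintegral_mono fun a => enorm_tsum_le_tsum_enorm
  exact lt_of_le_of_lt h3 h2.lt_top

/-- regularized 2F1 -/
noncomputable def rF (a b d : ℂ) (t : ℝ) : ℂ :=
  ∑' n : ℕ, (poch a n * poch b n / n.factorial * (Gamma (d + n))⁻¹) * (t : ℂ) ^ n

lemma rF_eq (a b d : ℂ) (t : ℝ) : rF a b d t = regularizedGaussHGFun a b d t := by
  unfold rF regularizedGaussHGFun FormalMultilinearSeries.sum
  congr 1
  ext n
  rw [FormalMultilinearSeries.apply_eq_pow_smul_coeff, coeff_regularizedGaussHGFunSeries]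
  simp only [poch, smul_eq_mul]
  field_simp

lemma rF_continuousAt (a b d : ℂ) {t : ℝ} (ht0 : 0 < t) (ht : t < 1) :
    ContinuousAt (rF a b d) t := by
  have h1 : rF a b d = fun t : ℝ => regularizedGaussHGFun a b d (t : ℂ) := by
    ext t; exact rF_eq a b d t
  rw [h1]
  have h2 : ContinuousAt (regularizedGaussHGFun a b d) (t : ℂ) := by
    have hr := radius_regularizedGaussHGFunSeries_ge_one a b d
    have hc := (FormalMultilinearSeries.hasFPowerSeriesOnBall (regularizedGaussHGFunSeries a b d)
      (lt_of_lt_of_le one_pos hr)).continuousOn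
    apply hc.continuousAt
    apply (Metric.isOpen_eball).mem_nhds
    rw [Metric.mem_eball, edist_zero_right]
    refine lt_of_lt_of_le ?_ hr
    rw [← ofReal_norm, Complex.norm_real, Real.norm_of_nonneg ht0.le]
    simpa using ht
  exact ContinuousAt.comp (f := fun t : ℝ => (t : ℂ)) h2 (by fun_prop)

/-- beta weight -/
noncomputable def wt (u v : ℂ) (t : ℝ) : ℂ := (t : ℂ) ^ (u - 1) * (1 - (t : ℂ)) ^ (v - 1)

lemma wt_integrable {u v : ℂ} (hu : 0 < u.re) (hv : 0 < v.re) :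
    IntegrableOn (wt u v) (Ioo 0 1) := by
  have := betaIntegral_convergent hu hv
  rw [intervalIntegrable_iff_integrableOn_Ioo_of_le zero_le_one] at this
  exact this

lemma wt_integral {u v : ℂ} (hu : 0 < u.re) (hv : 0 < v.re) :
    ∫ t in Ioo (0 : ℝ) 1, wt u v t = Gamma u * Gamma v * (Gamma (u + v))⁻¹ := by
  rw [← div_eq_mul_inv, ← betaIntegral_eq_Gamma_mul_div u v hu hv, betaIntegral,
    intervalIntegral.integral_of_le zero_le_one, integral_Ioc_eq_integral_Ioo]
  rfl

lemma wt_norm {u v : ℂ} {t : ℝ} (ht : t ∈ Ioo (0 : ℝ) 1) :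
    ((‖wt u v t‖ : ℝ) : ℂ) = wt u.re v.re t := by
  have h1 : (0 : ℝ) < 1 - t := by linarith [ht.2]
  unfold wt
  have e : (1 - (t : ℂ)) = ((1 - t : ℝ) : ℂ) := by push_cast; ring
  rw [e, norm_mul, Complex.norm_cpow_eq_rpow_re_of_pos ht.1, Complex.norm_cpow_eq_rpow_re_of_pos h1]
  push_cast
  rw [Complex.ofReal_cpow ht.1.le, Complex.ofReal_cpow h1.le]
  push_cast
  simp

lemma wt_integral_norm {u v : ℂ} (hu : 0 < u.re) (hv : 0 < v.re) :
    ∫ t in Ioo (0 : ℝ) 1, ‖wt u v t‖ =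
      ‖Gamma u.re * Gamma v.re * (Gamma (u.re + v.re))⁻¹‖ := by
  rw [← wt_integral (u := (u.re : ℂ)) (v := (v.re : ℂ)) (by simpa) (by simpa),
    ← setIntegral_congr_fun measurableSet_Ioo (fun t ht => wt_norm (u := u) (v := v) ht)]
  rw [integral_complex_ofReal, Complex.norm_real, Real.norm_of_nonneg]
  exact integral_nonneg fun _ => norm_nonneg _

lemma notPole_of_re {c : ℂ} (hc : 0 < c.re) : NotPole c := by
  intro n h
  rw [h] at hc
  simp at hc
  have : (0 : ℝ) ≤ n := by positivity
  linarith

lemma Gamma_poch {c : ℂ} (hc : NotPole c) (n : ℕ) : Gamma (c + n) = Gamma c * poch c n := by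
  have := Gamma_add_nat_div_Gamma_eq (n := n) c hc
  rw [poch, ← this, mul_div_cancel₀ _ (Gamma_ne_zero hc)]

lemma euler {a b c v d : ℂ} (hc : 0 < c.re) (hv : 0 < v.re) (h : 0 < (d + v - a - b).re) :
    IntegrableOn (fun t => wt c v t * rF a b d t) (Ioo 0 1) ∧
    ∫ t in Ioo (0 : ℝ) 1, wt c v t * rF a b d t = Gamma c * Gamma v * RR a b c d (c + v) := by
  set co : ℕ → ℂ := fun n => poch a n * poch b n / n.factorial * (Gamma (d + n))⁻¹ with hco
  set F : ℕ → ℝ → ℂ := fun n t => co n * wt (c + n) v t with hF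
  have hcn : ∀ n : ℕ, 0 < (c + n).re := by
    intro n; simp; positivity
  have hFi : ∀ n, Integrable (F n) (volume.restrict (Ioo 0 1)) := fun n =>
    (wt_integrable (hcn n) hv).const_mul _
  have hsum : Summable fun n => ∫ t in Ioo (0 : ℝ) 1, ‖F n t‖ := by
    have h1 : ∀ n, ∫ t in Ioo (0 : ℝ) 1, ‖F n t‖ =
        ‖tc a b c.re d (c.re + v.re) n‖ * ‖Gamma c.re * Gamma v.re‖ := by
      intro n
      simp only [hF, norm_mul (co n)]
      rw [integral_const_mul, wt_integral_norm (hcn n) hv, ← norm_mul, ← norm_mul]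
      have e1 : (((c + n).re : ℝ) : ℂ) = (c.re : ℂ) + n := by simp
      rw [e1, Gamma_poch (notPole_of_re (by simpa)) n, hco, tc]
      congr 1
      rw [show (c.re : ℂ) + n + v.re = c.re + v.re + n by ring]
      ring
    simp only [h1]
    apply Summable.mul_right
    apply summable_tc
    simp at h ⊢
    linarith
  have hpt : ∀ t ∈ Ioo (0 : ℝ) 1, ∑' n, F n t = wt c v t * rF a b d t := by
    intro t ht
    rw [rF, ← tsum_mul_left]
    congr 1
    ext n
    simp only [hF, hco, wt]
    have ht0 : (t : ℂ) ≠ 0 := by exact_mod_cast ht.1.ne'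
    rw [show c + n - 1 = (c - 1) + n by ring, cpow_add _ _ ht0, cpow_natCast]
    ring
  have hcont : ContinuousOn (fun t => wt c v t * rF a b d t) (Ioo 0 1) := by
    intro t ht
    apply ContinuousAt.continuousWithinAt
    apply ContinuousAt.mul _ (rF_continuousAt a b d ht.1 ht.2)
    unfold wt
    apply ContinuousAt.mul
    · exact ContinuousAt.cpow (by fun_prop) (by fun_prop) (ofReal_mem_slitPlane.2 ht.1)
    · refine ContinuousAt.cpow (by fun_prop) (by fun_prop) ?_
      norm_cast
      exact ofReal_mem_slitPlane.2 (by linarith [ht.2])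
  have hae : (fun t => ∑' n, F n t) =ᵐ[volume.restrict (Ioo 0 1)] fun t => wt c v t * rF a b d t :=
    (ae_restrict_iff' measurableSet_Ioo).2 (Eventually.of_forall hpt)
  have hm := (hcont.aestronglyMeasurable (μ := volume) measurableSet_Ioo).congr hae.symm
  refine ⟨(integrable_tsum_aux hFi hsum hm).congr hae, ?_⟩
  rw [← integral_congr_ae hae, ← integral_tsum_of_summable_integral_norm hFi hsum, RR,
    ← tsum_mul_left]
  congr 1
  ext n
  simp only [hF]
  rw [integral_const_mul, wt_integral (hcn n) hv, Gamma_poch (notPole_of_re hc) n, hco, tc,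
    show c + n + v = c + v + n by ring]
  ring

lemma poch_one (n : ℕ) : poch 1 n = n.factorial := by simp [poch]

lemma binom (a : ℂ) {t : ℝ} (ht : t ∈ Ioo (0 : ℝ) 1) : rF a 1 1 t = (1 - (t : ℂ)) ^ (-a) := by
  have h := (one_div_one_sub_cpow_hasFPowerSeriesOnBall_zero a).hasSum (y := (t : ℂ)) (by
    rw [Metric.mem_eball, edist_zero_right, ← ofReal_norm, Complex.norm_real,
      Real.norm_of_nonneg ht.1.le]
    simpa using ht.2)
  rw [cpow_neg, ← one_div, ← zero_add (t : ℂ), ← h.tsum_eq, rF]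
  congr 1
  ext n
  rw [FormalMultilinearSeries.apply_eq_pow_smul_coeff, FormalMultilinearSeries.coeff_ofScalars,
    poch_one, add_comm (1 : ℂ), Complex.Gamma_nat_eq_factorial]
  have hf : (n.factorial : ℂ) ≠ 0 := by exact_mod_cast n.factorial_ne_zero
  have : poch a n = n.factorial * Ring.choose (a + n - 1) n := by
    rw [← nsmul_eq_mul, ← Ring.descPochhammer_eq_factorial_smul_choose,
      Polynomial.descPochhammer_smeval_eq_ascPochhammer, Polynomial.ascPochhammer_smeval_cast,
      Polynomial.ascPochhammer_smeval_eq_eval, poch]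
    congr 1
    ring
  rw [this, smul_eq_mul]
  field_simp

/-- regularized Gauss summation -/
lemma gauss {a c v : ℂ} (hc : 0 < c.re) (hv : 0 < v.re) (h : 0 < (v - a).re) :
    RR a 1 c 1 (c + v) = Gamma (v - a) * (Gamma v)⁻¹ * (Gamma (c + v - a))⁻¹ := by
  have h1 := (euler (a := a) (b := 1) (d := 1) hc hv (by simp at h ⊢; linarith)).2
  have h2 : ∫ t in Ioo (0 : ℝ) 1, wt c v t * rF a 1 1 t = ∫ t in Ioo (0 : ℝ) 1, wt c (v - a) t := by
    apply setIntegral_congr_fun measurableSet_Ioo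
    intro t ht
    have h0 : 1 - (t : ℂ) ≠ 0 := by
      have : (1 - t : ℝ) ≠ 0 := by linarith [ht.2]
      exact_mod_cast this
    simp only [binom a ht, wt]
    rw [mul_assoc, ← cpow_add _ _ h0]
    congr 2
    ring
  rw [h2, wt_integral hc h] at h1
  have g1 := Gamma_ne_zero_of_re_pos hc
  have g2 := Gamma_ne_zero_of_re_pos hv
  rw [show c + v - a = c + (v - a) by ring]
  field_simp
  rw [div_eq_mul_inv]
  linear_combination -(Gamma c)⁻¹ * h1 + (Gamma (v-a) * (Gamma (c + (v - a)))⁻¹ - Gamma v * RR a 1 c 1 (c+v)) * (mul_inv_cancel₀ g1)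

lemma RR_cancel {x a c d : ℂ} (hx : 0 < x.re) :
    RR x a c d x = (Gamma x)⁻¹ * RR a 1 c 1 d := by
  rw [RR, RR, ← tsum_mul_left]
  congr 1
  ext n
  have hp : poch x n ≠ 0 := by
    intro h0
    have := Gamma_poch (notPole_of_re hx) n
    rw [h0, mul_zero] at this
    exact Gamma_ne_zero_of_re_pos (s := x + n) (by simp; positivity) this
  have hf : (n.factorial : ℂ) ≠ 0 := by exact_mod_cast n.factorial_ne_zero
  rw [tc, tc, Gamma_poch (notPole_of_re hx) n, poch_one, add_comm (1 : ℂ),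
    Complex.Gamma_nat_eq_factorial, mul_inv]
  field_simp

lemma RR_swap12 (a b c d e : ℂ) : RR a b c d e = RR b a c d e := by
  simp only [RR, tc, mul_comm (poch a _)]

/-- the difference in the connection formula -/
noncomputable def gg (a b d : ℂ) (t : ℝ) : ℂ :=
  sin (Real.pi * (d - a - b)) / Real.pi * rF a b d t -
    (Gamma (d - a))⁻¹ * (Gamma (d - b))⁻¹ * rF a b (1 - (d - a - b)) (1 - t) +
    (Gamma a)⁻¹ * (Gamma b)⁻¹ * ((1 - (t : ℂ)) ^ (d - a - b) *
      rF (d - a) (d - b) (1 + (d - a - b)) (1 - t))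

lemma reflect_int {f : ℝ → ℂ} (hf : IntegrableOn f (Ioo 0 1)) :
    IntegrableOn (fun t => f (1 - t)) (Ioo 0 1) ∧
    ∫ t in Ioo (0 : ℝ) 1, f (1 - t) = ∫ t in Ioo (0 : ℝ) 1, f t := by
  constructor
  · rw [← intervalIntegrable_iff_integrableOn_Ioo_of_le zero_le_one] at hf ⊢
    have := (hf.comp_sub_left 1).symm
    simpa using this
  · have := intervalIntegral.integral_comp_sub_left (a := 0) (b := 1) f 1
    simp only [sub_self, sub_zero] at this
    rw [intervalIntegral.integral_of_le zero_le_one, integral_Ioc_eq_integral_Ioo,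
      intervalIntegral.integral_of_le zero_le_one, integral_Ioc_eq_integral_Ioo] at this
    exact this

lemma int_gg {a b d c v : ℂ} (hc : 0 < c.re) (hv : 0 < v.re) (h1 : 0 < (d - a - b + v).re)
    (h2 : 0 < (c - d + 1).re) :
    IntegrableOn (fun t => wt c v t * gg a b d t) (Ioo 0 1) ∧
    ∫ t in Ioo (0 : ℝ) 1, wt c v t * gg a b d t =
      sin (Real.pi * (d - a - b)) / Real.pi * (Gamma c * Gamma v * RR a b c d (c + v)) -
      (Gamma (d - a))⁻¹ * (Gamma (d - b))⁻¹ *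
        (Gamma v * Gamma c * RR a b v (1 - (d - a - b)) (v + c)) +
      (Gamma a)⁻¹ * (Gamma b)⁻¹ * (Gamma (d - a - b + v) * Gamma c *
        RR (d - a) (d - b) (d - a - b + v) (1 + (d - a - b)) (d - a - b + v + c)) := by
  obtain ⟨i1, e1⟩ := euler (a := a) (b := b) (d := d) hc hv (by simp at h1 ⊢; linarith)
  obtain ⟨i2, e2⟩ := euler (a := a) (b := b) (d := 1 - (d - a - b)) hv hc
    (by simp at h2 ⊢; linarith)
  obtain ⟨i3, e3⟩ := euler (a := d - a) (b := d - b) (d := 1 + (d - a - b)) h1 hc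
    (by simp at h2 ⊢; linarith)
  obtain ⟨j2, f2⟩ := reflect_int i2
  obtain ⟨j3, f3⟩ := reflect_int i3
  rw [e2] at f2
  rw [e3] at f3
  rw [← e1, ← f2, ← f3]
  have key : ∀ t ∈ Ioo (0 : ℝ) 1, wt c v t * gg a b d t =
      sin (Real.pi * (d - a - b)) / Real.pi * (wt c v t * rF a b d t) -
      (Gamma (d - a))⁻¹ * (Gamma (d - b))⁻¹ *
        (wt v c (1 - t) * rF a b (1 - (d - a - b)) (1 - t)) +
      (Gamma a)⁻¹ * (Gamma b)⁻¹ * (wt (d - a - b + v) c (1 - t) *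
        rF (d - a) (d - b) (1 + (d - a - b)) (1 - t)) := by
    intro t ht
    have h0 : 1 - (t : ℂ) ≠ 0 := by
      have : (1 - t : ℝ) ≠ 0 := by linarith [ht.2]
      exact_mod_cast this
    have w1 : wt v c (1 - t) = wt c v t := by
      unfold wt
      push_cast
      rw [sub_sub_cancel, mul_comm]
    have w2 : wt (d - a - b + v) c (1 - t) = wt c v t * (1 - (t : ℂ)) ^ (d - a - b) := by
      unfold wt
      push_cast
      rw [sub_sub_cancel, mul_assoc, ← cpow_add _ _ h0, mul_comm]
      congr 2
      ring
    rw [w1, w2, gg]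
    ring
  have k1 := i1.const_mul (sin (Real.pi * (d - a - b)) / Real.pi)
  have k2 := j2.const_mul ((Gamma (d - a))⁻¹ * (Gamma (d - b))⁻¹)
  have k3 := j3.const_mul ((Gamma a)⁻¹ * (Gamma b)⁻¹)
  constructor
  · exact IntegrableOn.congr_fun ((k1.sub k2).add k3) (fun t ht => (key t ht).symm)
      measurableSet_Ioo
  · rw [setIntegral_congr_fun measurableSet_Ioo key, ← integral_const_mul, ← integral_const_mul,
      ← integral_const_mul, ← integral_sub k1 k2]
    exact integral_add (k1.sub k2) k3

lemma inv_reflect (z : ℂ) : (Gamma z)⁻¹ * (Gamma (1 - z))⁻¹ = sin (Real.pi * z) / Real.pi := by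
  rw [← mul_inv, Gamma_mul_Gamma_one_sub, inv_div]

lemma inv_reflect' {z : ℂ} (h : Gamma z ≠ 0) :
    (Gamma (1 - z))⁻¹ = Gamma z * (sin (Real.pi * z) / Real.pi) := by
  rw [← inv_reflect]; field_simp

lemma trig_aux (a b c d : ℂ) :
    sin (d - a - b) * sin (d - c) - sin (d - a) * sin (d - b - c) + sin b * sin (a - c) = 0 := by
  have e : ∀ x y : ℂ, sin x * sin y = (cos (x - y) - cos (x + y)) / 2 := by
    intro x y; rw [cos_sub, cos_add]; ring
  rw [e, e, e]
  rw [show d - a - b - (d - c) = -(a + b - c) by ring, show b - (a - c) = -(a - b - c) by ring,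
    show d - a - (d - b - c) = -(a - b - c) by ring,
    show d - a - b + (d - c) = d - a + (d - b - c) by ring,
    show b + (a - c) = a + b - c by ring, cos_neg, cos_neg]
  ring

lemma int_gg_zero {a b d c : ℂ} (h1 : 0 < c.re) (h2 : 0 < (a - c).re) (h3 : 0 < (d - b - c).re)
    (h4 : 0 < (c - d + 1).re) (h5 : 0 < (d - c).re) (h6 : 0 < (1 - d + b + c).re)
    (h7 : 0 < (1 - a + c).re) :
    IntegrableOn (fun t => wt c (a - c) t * gg a b d t) (Ioo 0 1) ∧
    ∫ t in Ioo (0 : ℝ) 1, wt c (a - c) t * gg a b d t = 0 := by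
  obtain ⟨i, e⟩ := int_gg (a := a) (b := b) (d := d) h1 h2 (by simp at h3 ⊢; linarith) h4
  refine ⟨i, ?_⟩
  have ha : 0 < a.re := by simp at h2; linarith
  have hdb : 0 < (d - b).re := by simp at h3 ⊢; linarith
  rw [e, add_sub_cancel, sub_add_cancel, show d - a - b + (a - c) = d - b - c by ring,
    sub_add_cancel, RR_cancel ha, RR_cancel ha, RR_swap12 (d - a), RR_cancel hdb]
  have g1 := gauss (a := b) h1 h5 (by simp at h3 ⊢; linarith)
  have g2 := gauss (a := b) h2 h6 (by simp at h4 ⊢; linarith)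
  have g3 := gauss (a := d - a) h3 h7 (by simp at h4 ⊢; linarith)
  rw [add_sub_cancel] at g1
  rw [show a - c + (1 - d + b + c) = 1 - (d - a - b) by ring] at g2
  rw [show d - b - c + (1 - a + c) = 1 + (d - a - b) by ring] at g3
  rw [g1, g2, g3]
  have X := Gamma_ne_zero_of_re_pos h2
  have Y := Gamma_ne_zero_of_re_pos h3
  have Z := Gamma_ne_zero_of_re_pos h4
  have r1 : (Gamma (d - c))⁻¹ = Gamma (c - d + 1) * (sin (Real.pi * (d - c)) / Real.pi) := by
    have := inv_reflect (d - c)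
    rw [show 1 - (d - c) = c - d + 1 by ring] at this
    rw [← this]; field_simp
  have r2 := inv_reflect' Y
  have r3 := inv_reflect' X
  have r4 := inv_reflect (d - a)
  have r5 := inv_reflect b
  rw [show d - c - b = d - b - c by ring, show 1 - d + b + c - b = c - d + 1 by ring,
    show 1 - (d - a - b) - b = 1 - (d - a) by ring, show 1 - a + c - (d - a) = c - d + 1 by ring,
    show 1 + (d - a - b) - (d - a) = 1 - b by ring, show 1 - a + c = 1 - (a - c) by ring,
    show 1 - d + b + c = 1 - (d - b - c) by ring, r1, r2, r3]
  have T := trig_aux (Real.pi * a) (Real.pi * b) (Real.pi * c) (Real.pi * d)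
  simp only [← mul_sub] at T
  have L : ∀ G A B C D S1 S2 S3 S4 S5 S6 P Z X Y E1 E2 E3 E4: ℂ,
      E1 * E2 = S3 / P → E3 * E4 = S5 / P → S1 * S2 - S3 * S4 + S5 * S6 = 0 →
      S1 / P * (G * X * (A * (Y * (Z * (S2 / P)) * B))) -
        E1 * B * (X * G * (A * (Z * (Y * (S4 / P)) * E2))) +
        A * E3 * (Y * G * (B * (Z * (X * (S6 / P)) * E4))) = 0 := by
    intro G A B C D S1 S2 S3 S4 S5 S6 P Z X Y E1 E2 E3 E4 q1 q2 q3
    linear_combination G * X * A * Y * Z * B * (P⁻¹ ^ 2 * q3 - S4 / P * q1 + S6 / P * q2)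
  exact L (Gamma c) (Gamma a)⁻¹ (Gamma (d - b))⁻¹ 0 0 _ _ _ _ _ _ _ _ _ _ _ _ _ _ r4 r5 T

lemma cpow_aux {t : ℝ} (ht : t ∈ Ioo (0 : ℝ) 1) (a c : ℂ) :
    ((1 / (1 - t) ^ 2 : ℝ) : ℂ) * (((t / (1 - t) : ℝ) : ℂ) ^ (c - 1) *
      ((1 + t / (1 - t) : ℝ) : ℂ) ^ (-a)) = wt c (a - c) t := by
  have h1 : (0 : ℝ) < 1 - t := by linarith [ht.2]
  have h0 : ((1 - t : ℝ) : ℂ) ≠ 0 := by exact_mod_cast h1.ne'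
  have harg : arg ((1 - t : ℝ) : ℂ) ≠ Real.pi := by
    rw [arg_ofReal_of_nonneg h1.le]; exact Real.pi_ne_zero.symm
  have e1 : 1 + t / (1 - t) = (1 - t)⁻¹ := by field_simp; ring
  have e2 : (1 - (t : ℂ)) = ((1 - t : ℝ) : ℂ) := by push_cast; ring
  rw [e1, div_eq_mul_inv t, ofReal_mul, mul_cpow_ofReal_nonneg ht.1.le (inv_nonneg.2 h1.le),
    ofReal_inv, inv_cpow _ _ harg, inv_cpow _ _ harg, wt, e2, ← cpow_neg, ← cpow_neg]
  have e3 : ((1 / (1 - t) ^ 2 : ℝ) : ℂ) = ((1 - t : ℝ) : ℂ) ^ (-2 : ℂ) := by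
    rw [cpow_neg, show (2 : ℂ) = ((2 : ℕ) : ℂ) by norm_num, cpow_natCast]
    push_cast
    simp
  rw [e3]
  have e4 : a - c - 1 = -2 + -(c - 1) + - -a := by ring
  rw [e4, cpow_add _ _ h0, cpow_add _ _ h0]
  ring

lemma connection {a b d : ℂ} (h1 : 1 / 2 < a.re) (h2 : a.re < 3 / 2) (h3 : 1 / 2 < d.re)
    (h4 : d.re < 3 / 2) (h5 : 1 / 2 < (d - b).re) (h6 : (d - b).re < 3 / 2)
    {t : ℝ} (ht : t ∈ Ioo (0 : ℝ) 1) : gg a b d t = 0 := by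
  set f : ℝ → ℂ := fun w => ((1 + w : ℝ) : ℂ) ^ (-a) * gg a b d (w / (1 + w)) with hf
  set φ : ℝ → ℝ := fun t => t / (1 - t) with hφ
  have him : φ '' Ioo 0 1 = Ioi 0 := by
    ext w
    constructor
    · rintro ⟨t, ht, rfl⟩
      have : 0 < 1 - t := by linarith [ht.2]
      exact div_pos ht.1 this
    · intro hw
      have hw : 0 < w := hw
      refine ⟨w / (1 + w), ⟨by positivity, ?_⟩, ?_⟩
      · rw [div_lt_one (by positivity)]; linarith
      · simp only [hφ]
        have : 1 - w / (1 + w) = 1 / (1 + w) := by field_simp; ring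
        rw [this]; field_simp
  have hinv : ∀ t ∈ Ioo (0 : ℝ) 1, φ t / (1 + φ t) = t := by
    intro t ht
    have : 1 - t ≠ 0 := by linarith [ht.2]
    simp only [hφ]
    field_simp
    ring
  have hinj : InjOn φ (Ioo 0 1) := by
    intro x hx y hy hxy
    rw [← hinv x hx, ← hinv y hy, hxy]
  have hder : ∀ x ∈ Ioo (0 : ℝ) 1, HasDerivWithinAt φ (1 / (1 - x) ^ 2) (Ioo 0 1) x := by
    intro x hx
    have h0 : 1 - x ≠ 0 := by linarith [hx.2]
    have := ((hasDerivAt_id x).div ((hasDerivAt_id x).const_sub 1) h0).hasDerivWithinAt (s := Ioo 0 1)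
    convert! this using 1
    simp
  have hpt : ∀ c : ℂ, ∀ x ∈ Ioo (0 : ℝ) 1, |1 / (1 - x) ^ 2| • (((φ x : ℝ) : ℂ) ^ (c - 1) • f (φ x)) =
      wt c (a - c) x * gg a b d x := by
    intro c x hx
    rw [abs_of_nonneg (by positivity), hf]
    simp only [hinv x hx]
    rw [← cpow_aux hx a c, real_smul, smul_eq_mul]
    ring
  have hline : ∀ c : ℂ, c.re = 1 / 2 → MellinConvergent f c ∧ mellin f c = 0 := by
    intro c hc
    obtain ⟨i, e⟩ := int_gg_zero (a := a) (b := b) (d := d) (c := c) (by rw [hc]; norm_num)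
      (by simp [hc] at *; linarith) (by simp [hc] at *; linarith) (by simp [hc] at *; linarith)
      (by simp [hc] at *; linarith) (by simp [hc] at *; linarith) (by simp [hc] at *; linarith)
    constructor
    · rw [MellinConvergent, ← him, integrableOn_image_iff_integrableOn_abs_deriv_smul
        measurableSet_Ioo hder hinj]
      exact i.congr_fun (fun x hx => (hpt c x hx).symm) measurableSet_Ioo
    · rw [mellin, ← him, integral_image_eq_integral_abs_deriv_smul measurableSet_Ioo hder hinj,
        setIntegral_congr_fun measurableSet_Ioo (hpt c), e]
  have h1t : 0 < 1 - t := by linarith [ht.2]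
  have hx0 : 0 < φ t := div_pos ht.1 h1t
  have hm : ∀ y : ℝ, mellin f ((1 / 2 : ℝ) + y * I) = 0 := by
    intro y
    apply (hline _ _).2
    simp
  have hcont : ContinuousAt f (φ t) := by
    simp only [hf]
    apply ContinuousAt.mul
    · exact ContinuousAt.cpow (by fun_prop) (by fun_prop) (ofReal_mem_slitPlane.2 (by positivity))
    · have hg : ContinuousAt (gg a b d) (φ t / (1 + φ t)) := by
        rw [hinv t ht]
        unfold gg
        have c1 := rF_continuousAt a b d ht.1 ht.2
        have c2 : ContinuousAt (fun t => rF a b (1 - (d - a - b)) (1 - t)) t :=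
          ContinuousAt.comp (f := fun t : ℝ => 1 - t)
            (rF_continuousAt a b _ h1t (by linarith [ht.1])) (by fun_prop)
        have c3 : ContinuousAt (fun t => rF (d - a) (d - b) (1 + (d - a - b)) (1 - t)) t :=
          ContinuousAt.comp (f := fun t : ℝ => 1 - t)
            (rF_continuousAt _ _ _ h1t (by linarith [ht.1])) (by fun_prop)
        have c4 : ContinuousAt (fun t : ℝ => (1 - (t : ℂ)) ^ (d - a - b)) t := by
          refine ContinuousAt.cpow (by fun_prop) (by fun_prop) ?_
          norm_cast
          exact ofReal_mem_slitPlane.2 h1t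
        exact ((c1.const_mul _).sub (c2.const_mul _)).add ((c4.mul c3).const_mul _)
      exact ContinuousAt.comp (f := fun w : ℝ => w / (1 + w)) hg
        (ContinuousAt.div (by fun_prop) (by fun_prop) (by positivity))
  have hV : VerticalIntegrable (mellin f) (1 / 2 : ℝ) := by
    unfold VerticalIntegrable
    simp only [hm]
    exact integrable_zero _ _ _
  have := mellinInv_mellin_eq (1 / 2) f hx0 (hline _ (by simp)).1 hV hcont
  rw [mellinInv] at this
  simp only [hm, smul_zero, integral_zero] at this
  simp only [hf, hinv t ht] at this
  have h3 := (mul_eq_zero.1 this.symm).resolve_left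
  apply h3
  rw [cpow_eq_zero_iff]
  push Not
  intro h
  exfalso
  have : (1 + φ t : ℝ) = 0 := by exact_mod_cast h
  linarith

noncomputable def EE (a b c d e : ℂ) : ℂ :=
  sin (Real.pi * (d - a - b)) / Real.pi * RR a b c d e -
    (Gamma (d - a))⁻¹ * (Gamma (d - b))⁻¹ * RR a b (e - c) (1 - (d - a - b)) e +
    Gamma (d + e - a - b - c) * (Gamma a)⁻¹ * (Gamma b)⁻¹ * (Gamma (e - c))⁻¹ *
      RR (d - a) (d - b) (d + e - a - b - c) (1 + (d - a - b)) (d + e - a - b)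

lemma EE_local {a b c d e : ℂ} (h1 : 1 / 2 < a.re) (h2 : a.re < 3 / 2) (h3 : 1 / 2 < d.re)
    (h4 : d.re < 3 / 2) (h5 : 1 / 2 < (d - b).re) (h6 : (d - b).re < 3 / 2)
    (hc : 0 < c.re) (hv : 0 < (e - c).re) (h7 : 0 < (d + e - a - b - c).re)
    (h8 : 0 < (c - d + 1).re) : EE a b c d e = 0 := by
  have e1 : d - a - b + (e - c) = d + e - a - b - c := by ring
  obtain ⟨-, H⟩ := int_gg (a := a) (b := b) (d := d) hc hv (by rw [e1]; exact h7) h8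
  have h0 : ∫ t in Ioo (0 : ℝ) 1, wt c (e - c) t * gg a b d t = 0 := by
    rw [setIntegral_congr_fun measurableSet_Ioo (g := fun _ => (0 : ℂ))
      (fun t ht => by simp only [connection h1 h2 h3 h4 h5 h6 ht, mul_zero])]
    simp
  rw [h0] at H
  have g1 : Gamma c ≠ 0 := Gamma_ne_zero (notPole_of_re hc)
  have g2 : Gamma (e - c) ≠ 0 := Gamma_ne_zero (notPole_of_re hv)
  have e2 : c + (e - c) = e := by ring
  have e3 : e - c + c = e := by ring
  have e4 : d + e - a - b - c + c = d + e - a - b := by ring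
  rw [e1, e2, e3, e4] at H
  have : Gamma c * Gamma (e - c) * EE a b c d e = 0 := by
    rw [H, EE]
    have := mul_inv_cancel₀ g2
    linear_combination (Gamma c * Gamma (d + e - a - b - c) * (Gamma a)⁻¹ * (Gamma b)⁻¹ *
      RR (d - a) (d - b) (d + e - a - b - c) (1 + (d - a - b)) (d + e - a - b)) * this
  simpa [g1, g2] using this

lemma EE_diff {a b c d e : ℂ → ℂ} (ha : Differentiable ℂ a) (hb : Differentiable ℂ b)
    (hc : Differentiable ℂ c) (hd : Differentiable ℂ d) (he : Differentiable ℂ e) (z : ℂ)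
    (h7 : 0 < (d z + e z - a z - b z - c z).re) (h8 : 0 < (c z - d z + 1).re) :
    DifferentiableAt ℂ (fun z => EE (a z) (b z) (c z) (d z) (e z)) z := by
  have iG : ∀ {f : ℂ → ℂ}, Differentiable ℂ f →
      DifferentiableAt ℂ (fun z => (Gamma (f z))⁻¹) z := fun hf =>
    (differentiable_one_div_Gamma.comp hf) z
  have r1 := differentiableAt_RR ha hb hc hd he z h7
  have r2 := differentiableAt_RR ha hb (he.sub hc) (((hd.sub ha).sub hb).const_sub 1) he z
    (by simp at h8 ⊢; linarith)
  have r3 := differentiableAt_RR (hd.sub ha) (hd.sub hb) ((((hd.add he).sub ha).sub hb).sub hc)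
    (((hd.sub ha).sub hb).const_add 1) (((hd.add he).sub ha).sub hb) z
    (by simp at h8 ⊢; linarith)
  have g : DifferentiableAt ℂ (fun z => Gamma (d z + e z - a z - b z - c z)) z :=
    (differentiableAt_Gamma _ (notPole_of_re h7)).comp z
      (((((hd.add he).sub ha).sub hb).sub hc) z)
  have s : DifferentiableAt ℂ (fun z => sin (Real.pi * (d z - a z - b z)) / Real.pi) z := by
    have := ha z
    have := hb z
    have := hd z
    fun_prop
  exact ((s.mul r1).sub (((iG (hd.sub ha)).mul (iG (hd.sub hb))).mul r2)).add
    ((((g.mul (iG ha)).mul (iG hb)).mul (iG (he.sub hc))).mul r3)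

lemma EE_zero {a b c d e : ℂ} (h7 : 0 < (d + e - a - b - c).re) (h8 : 0 < (c - d + 1).re) :
    EE a b c d e = 0 := by
  let L : ℂ → ℂ → ℂ → ℂ := fun p q z => p + z * (q - p)
  have hL : ∀ p q, Differentiable ℂ (L p q) := fun p q => by
    simp only [L]; fun_prop
  have hLc : ∀ p q, Continuous (L p q) := fun p q => (hL p q).continuous
  let A := L a 1
  let B := L b (1 / 4)
  let C := L c (1 / 2)
  let D := L d 1
  let E := L e 1
  have hA : Differentiable ℂ A := hL _ _
  have hB : Differentiable ℂ B := hL _ _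
  have hC : Differentiable ℂ C := hL _ _
  have hD : Differentiable ℂ D := hL _ _
  have hE : Differentiable ℂ E := hL _ _
  have cA := hA.continuous
  have cB := hB.continuous
  have cC := hC.continuous
  have cD := hD.continuous
  have cE := hE.continuous
  let U : Set ℂ := {z | 0 < (D z + E z - A z - B z - C z).re ∧ 0 < (C z - D z + 1).re}
  have hU : IsOpen U :=
    IsOpen.inter
      (isOpen_lt continuous_const
        (continuous_re.comp ((((cD.add cE).sub cA).sub cB).sub cC)) :
        IsOpen {z : ℂ | 0 < (D z + E z - A z - B z - C z).re})
      (isOpen_lt continuous_const (continuous_re.comp ((cC.sub cD).add continuous_const)) :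
        IsOpen {z : ℂ | 0 < (C z - D z + 1).re})
  have hconv : Convex ℝ U := by
    intro x hx y hy s t hs ht hst
    have key : ∀ X Y : ℝ, 0 < X → 0 < Y → 0 < s * X + t * Y := by
      intro X Y hX hY
      rcases hs.eq_or_lt with h | h
      · have : t = 1 := by linarith
        subst this; rw [← h]; simpa using hY
      · have := mul_pos h hX
        have := mul_nonneg ht hY.le
        linarith
    have hsc : (s : ℂ) + t = 1 := by exact_mod_cast hst
    constructor
    · have := key _ _ hx.1 hy.1
      rw [← re_ofReal_mul, ← re_ofReal_mul, ← add_re] at this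
      convert this using 2
      simp only [A, B, C, D, E, L, real_smul]
      linear_combination -(d + e - a - b - c) * hsc
    · have := key _ _ hx.2 hy.2
      rw [← re_ofReal_mul, ← re_ofReal_mul, ← add_re] at this
      convert this using 2
      simp only [A, B, C, D, E, L, real_smul]
      linear_combination -(c - d + 1) * hsc
  have hdiff : DifferentiableOn ℂ (fun z => EE (A z) (B z) (C z) (D z) (E z)) U :=
    fun z hz => (EE_diff hA hB hC hD hE z hz.1 hz.2).differentiableWithinAt
  have A1 : A 1 = 1 := by simp [A, L]
  have B1 : B 1 = 1 / 4 := by simp [B, L]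
  have C1 : C 1 = 1 / 2 := by simp [C, L]
  have D1 : D 1 = 1 := by simp [D, L]
  have E1 : E 1 = 1 := by simp [E, L]
  have hm1 : (1 : ℂ) ∈ U := by
    constructor
    · rw [A1, B1, C1, D1, E1]; norm_num
    · rw [C1, D1]; norm_num
  have hm0 : (0 : ℂ) ∈ U := by
    constructor
    · simpa [A, B, C, D, E, L] using h7
    · simpa [C, D, L] using h8
  have ev : ∀ {f : ℂ → ℂ} (x : ℝ), Continuous f → x < (f 1).re → ∀ᶠ z in 𝓝 (1 : ℂ), x < (f z).re :=
    fun x hf h => (isOpen_lt continuous_const (continuous_re.comp hf)).mem_nhds h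
  have ev' : ∀ {f : ℂ → ℂ} (x : ℝ), Continuous f → (f 1).re < x → ∀ᶠ z in 𝓝 (1 : ℂ), (f z).re < x :=
    fun x hf h => (isOpen_lt (continuous_re.comp hf) continuous_const).mem_nhds h
  have hev : (fun z => EE (A z) (B z) (C z) (D z) (E z)) =ᶠ[𝓝 1] 0 := by
    filter_upwards [hU.mem_nhds hm1, ev (1 / 2) cA (by rw [A1]; norm_num),
      ev' (3 / 2) cA (by rw [A1]; norm_num), ev (1 / 2) cD (by rw [D1]; norm_num),
      ev' (3 / 2) cD (by rw [D1]; norm_num),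
      ev (f := fun z => D z - B z) (1 / 2) (cD.sub cB) (by rw [D1, B1]; norm_num),
      ev' (f := fun z => D z - B z) (3 / 2) (cD.sub cB) (by rw [D1, B1]; norm_num),
      ev 0 cC (by rw [C1]; norm_num),
      ev (f := fun z => E z - C z) 0 (cE.sub cC) (by rw [E1, C1]; norm_num)] with
      z k0 k1 k2 k3 k4 k5 k6 k7 k8
    exact EE_local k1 k2 k3 k4 k5 k6 k7 k8 k0.1 k0.2
  have := (hdiff.analyticOnNhd hU).eqOn_zero_of_preconnected_of_eventuallyEq_zero
    hconv.isPreconnected hm1 hev hm0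
  simpa [A, B, C, D, E, L] using this

lemma F32_eq (a b c : ℂ) {d e : ℂ} (hd : NotPole d) (he : NotPole e) :
    F32 a b c d e = Gamma d * Gamma e * RR a b c d e := by
  rw [F32, RR, ← tsum_mul_left]
  congr 1
  ext n
  have g1 : Gamma d ≠ 0 := Gamma_ne_zero hd
  have g2 : Gamma e ≠ 0 := Gamma_ne_zero he
  rw [tc, Gamma_poch hd, Gamma_poch he]
  simp only [mul_inv, div_eq_mul_inv]
  have i1 := mul_inv_cancel₀ g1
  have i2 := mul_inv_cancel₀ g2
  generalize (Gamma d)⁻¹ = u at *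
  generalize (Gamma e)⁻¹ = v at *
  linear_combination (-(poch a n * poch b n * poch c n * (n.factorial : ℂ)⁻¹ * (poch d n)⁻¹ *
    (poch e n)⁻¹)) * (Gamma e * v * i1 + i2)

theorem F32_transformation_two_terms (α₁ α₂ α₃ β₁ β₂ : ℂ)
    (h₁ : 0 < (β₁ + β₂ - α₁ - α₂ - α₃).re) (h₂ : 0 < (α₃ - β₁ + 1).re)
    (hβ₁ : NotPole β₁) (hβ₂ : NotPole β₂)
    (hl₁ : NotPole (α₁ + α₂ - β₁ + 1)) (hl₂ : NotPole (β₁ - α₁ - α₂ + 1))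
    (hl₃ : NotPole (β₁ + β₂ - α₁ - α₂))
    (hg₁ : NotPole (β₁ - α₁ - α₂)) (hg₂ : NotPole (β₁ - α₁)) (hg₃ : NotPole (β₁ - α₂))
    (hg₄ : NotPole (α₁ + α₂ - β₁)) (hg₅ : NotPole (β₁ + β₂ - α₁ - α₂ - α₃))
    (hg₆ : NotPole α₁) (hg₇ : NotPole α₂) (hg₈ : NotPole (β₂ - α₃)) :
    F32 α₁ α₂ α₃ β₁ β₂ =
      Complex.Gamma β₁ * Complex.Gamma (β₁ - α₁ - α₂) /
          (Complex.Gamma (β₁ - α₁) * Complex.Gamma (β₁ - α₂)) *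
        F32 α₁ α₂ (β₂ - α₃) (α₁ + α₂ - β₁ + 1) β₂ +
      Complex.Gamma β₁ * Complex.Gamma β₂ * Complex.Gamma (α₁ + α₂ - β₁) *
          Complex.Gamma (β₁ + β₂ - α₁ - α₂ - α₃) /
          (Complex.Gamma α₁ * Complex.Gamma α₂ * Complex.Gamma (β₂ - α₃) *
            Complex.Gamma (β₁ + β₂ - α₁ - α₂)) *
        F32 (β₁ - α₁) (β₁ - α₂) (β₁ + β₂ - α₁ - α₂ - α₃) (β₁ - α₁ - α₂ + 1)
          (β₁ + β₂ - α₁ - α₂) := by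
  have H := EE_zero h₁ h₂
  rw [F32_eq _ _ _ hβ₁ hβ₂, F32_eq _ _ _ hl₁ hβ₂, F32_eq _ _ _ hl₂ hl₃]
  have r1 := inv_reflect (β₁ - α₁ - α₂)
  have r2 := inv_reflect (α₁ + α₂ - β₁)
  have e0 : α₁ + α₂ - β₁ + 1 = 1 - (β₁ - α₁ - α₂) := by ring
  have e1 : β₁ - α₁ - α₂ + 1 = 1 + (β₁ - α₁ - α₂) := by ring
  have e2 : 1 - (α₁ + α₂ - β₁) = 1 + (β₁ - α₁ - α₂) := by ring
  have e3 : (Real.pi : ℂ) * (α₁ + α₂ - β₁) = -(Real.pi * (β₁ - α₁ - α₂)) := by ring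
  rw [e2, e3, Complex.sin_neg] at r2
  rw [e0] at hl₁ ⊢
  rw [e1] at hl₂ ⊢
  rw [EE] at H
  have g1 := Complex.Gamma_ne_zero hg₁
  have g2 := Complex.Gamma_ne_zero hg₂
  have g3 := Complex.Gamma_ne_zero hg₃
  have g4 := Complex.Gamma_ne_zero hg₄
  have g5 := Complex.Gamma_ne_zero hg₅
  have g6 := Complex.Gamma_ne_zero hg₆
  have g7 := Complex.Gamma_ne_zero hg₇
  have g8 := Complex.Gamma_ne_zero hg₈
  have l1 := Complex.Gamma_ne_zero hl₁
  have l2 := Complex.Gamma_ne_zero hl₂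
  have l3 := Complex.Gamma_ne_zero hl₃
  have b1 := Complex.Gamma_ne_zero hβ₁
  have b2 := Complex.Gamma_ne_zero hβ₂
  rw [← r1] at H
  have r3 : (Complex.Gamma (α₁ + α₂ - β₁))⁻¹ * (Complex.Gamma (1 + (β₁ - α₁ - α₂)))⁻¹ =
      -((Complex.Gamma (β₁ - α₁ - α₂))⁻¹ * (Complex.Gamma (1 - (β₁ - α₁ - α₂)))⁻¹) := by
    rw [r1, r2, neg_div]
  have r4 : Complex.Gamma (α₁ + α₂ - β₁) * Complex.Gamma (1 + (β₁ - α₁ - α₂)) =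
      -(Complex.Gamma (β₁ - α₁ - α₂) * Complex.Gamma (1 - (β₁ - α₁ - α₂))) := by
    have := congrArg Inv.inv r3
    simpa only [mul_inv, inv_inv, inv_neg] using this
  generalize Complex.Gamma (β₁ - α₁ - α₂) = G1 at *
  generalize Complex.Gamma (1 - (β₁ - α₁ - α₂)) = G2 at *
  generalize Complex.Gamma (α₁ + α₂ - β₁) = G3 at *
  generalize Complex.Gamma (1 + (β₁ - α₁ - α₂)) = G4 at *
  generalize RR _ _ _ _ _ = X at *
  generalize RR _ _ _ _ _ = Y at *
  generalize RR _ _ _ _ _ = Z at *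
  generalize Complex.Gamma (β₁ - α₁) = y1 at *
  generalize Complex.Gamma (β₁ - α₂) = y2 at *
  generalize Complex.Gamma (β₁ + β₂ - α₁ - α₂ - α₃) = y3 at *
  generalize Complex.Gamma (β₁ + β₂ - α₁ - α₂) = y4 at *
  generalize Complex.Gamma (β₂ - α₃) = y5 at *
  generalize Complex.Gamma α₁ = y6 at *
  generalize Complex.Gamma α₂ = y7 at *
  generalize Complex.Gamma β₁ = y8 at *
  generalize Complex.Gamma β₂ = y9 at *
  have hX : X = G1 * G2 * (y1⁻¹ * y2⁻¹ * Y - y3 * y6⁻¹ * y7⁻¹ * y5⁻¹ * Z) := by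
    have i1 := mul_inv_cancel₀ g1
    have i2 := mul_inv_cancel₀ l1
    linear_combination G1 * G2 * H - X * (G2 * G2⁻¹ * i1 + i2)
  have hr : y8 * y9 * G3 * y3 / (y6 * y7 * y5 * y4) * (G4 * y4 * Z) =
      y8 * y9 * (G3 * G4) * y3 / (y6 * y7 * y5) * Z := by
    field_simp
  rw [hr, r4, hX]
  field_simp
  ring
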